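/- Let 0 < d < 2 and set α* = arcsin(d/2), σ* = arcsin(d/4). Then: (i) for all σ ∈ [0, π] and all δ with α* ≤ δ ≤ π/2, one has d_RL(d,σ,δ) ≤ 2, with equality if and only if δ = α* and σ ∈ {0, π}; (ii) for all σ with σ* < σ < π − σ* and all δ with 0 ≤ δ ≤ α*, one has d_RL(d,σ,δ) < 2. -/

import Mathlib

open Real

/-- Distance between the center of the right starting disk and the left final disk,
in `(σ, δ)` coordinates. -/
noncomputable def dRL (d σ δ : ℝ) : ℝ :=
  Real.sqrt (d ^ 2 - 4 * d * Real.cos δ * Real.sin σ + 4 * Real.cos δ ^ 2)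

/-- Let `0 < d < 2`, `α* = arcsin (d/2)`, `σ* = arcsin (d/4)`.
(i) For `σ ∈ [0, π]` and `α* ≤ δ ≤ π/2`, `d_RL ≤ 2`, with equality iff
`δ = α*` and `σ ∈ {0, π}`.  (ii) For `σ* < σ < π - σ*` and `0 ≤ δ ≤ α*`,
`d_RL < 2`. -/
theorem dRL_region_bounds (d : ℝ) (hd0 : 0 < d) (hd2 : d < 2) :
    (∀ σ ∈ Set.Icc (0:ℝ) π, ∀ δ : ℝ, Real.arcsin (d / 2) ≤ δ → δ ≤ π / 2 →
      dRL d σ δ ≤ 2 ∧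
        (dRL d σ δ = 2 ↔ δ = Real.arcsin (d / 2) ∧ (σ = 0 ∨ σ = π))) ∧
    (∀ σ δ : ℝ, Real.arcsin (d / 4) < σ → σ < π - Real.arcsin (d / 4) →
      0 ≤ δ → δ ≤ Real.arcsin (d / 2) → dRL d σ δ < 2) := by
  have hpi := Real.pi_pos
  constructor
  · rintro σ ⟨h0, h1⟩ δ hδ1 hδ2
    have hA : 0 < Real.arcsin (d / 2) := Real.arcsin_pos.2 (by linarith)
    have hs : d / 2 ≤ Real.sin δ :=
      (Real.arcsin_le_iff_le_sin ⟨by linarith, by linarith⟩ ⟨by linarith, hδ2⟩).1 hδ1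
    have hc : 0 ≤ Real.cos δ := Real.cos_nonneg_of_mem_Icc ⟨by linarith, hδ2⟩
    have hσ : 0 ≤ Real.sin σ := Real.sin_nonneg_of_nonneg_of_le_pi h0 h1
    have hsc := Real.sin_sq_add_cos_sq δ
    have hp : 0 ≤ d * Real.cos δ * Real.sin σ := by positivity
    have hle : d ^ 2 - 4 * d * Real.cos δ * Real.sin σ + 4 * Real.cos δ ^ 2 ≤ 2 ^ 2 := by
      nlinarith
    refine ⟨Real.sqrt_le_iff.2 ⟨by norm_num, hle⟩, ?_⟩
    unfold dRL
    rw [Real.sqrt_eq_iff_mul_self_eq_of_pos (by norm_num : (0:ℝ) < 2)]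
    constructor
    · intro h
      have e1 : Real.sin δ = d / 2 := by
        apply le_antisymm _ hs
        nlinarith
      have e2 : d * Real.cos δ * Real.sin σ = 0 := by
        rw [e1] at hsc
        nlinarith
      have hc0 : Real.cos δ ≠ 0 := by
        intro h
        rw [e1, h] at hsc
        nlinarith
      refine ⟨?_, ?_⟩
      · rw [← e1, Real.arcsin_sin (by linarith) hδ2]
      · have e3 : Real.sin σ = 0 := by
          rcases mul_eq_zero.1 e2 with h | h
          · exact absurd h (mul_ne_zero hd0.ne' hc0)
          · exact h
        by_contra hcon
        push Not at hcon
        have := Real.sin_pos_of_pos_of_lt_pi (lt_of_le_of_ne h0 (Ne.symm hcon.1))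
          (lt_of_le_of_ne h1 hcon.2)
        linarith
    · rintro ⟨e, h⟩
      have e1 : Real.sin δ = d / 2 := by
        rw [e, Real.sin_arcsin (by linarith) (by linarith)]
      have e3 : Real.sin σ = 0 := by
        rcases h with h | h <;> simp [h]
      rw [e1] at hsc
      rw [e3]
      nlinarith
  · intro σ δ h1 h2 h3 h4
    have hA : 0 < Real.arcsin (d / 4) := Real.arcsin_pos.2 (by linarith)
    have hB : Real.arcsin (d / 2) < π / 2 := Real.arcsin_lt_pi_div_two.2 (by linarith)
    have hc : 0 < Real.cos δ := Real.cos_pos_of_mem_Ioo ⟨by linarith, by linarith⟩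
    have hc1 := Real.cos_le_one δ
    have hσ : d / 4 < Real.sin σ := by
      rcases le_total σ (π / 2) with h | h
      · exact (Real.arcsin_lt_iff_lt_sin ⟨by linarith, by linarith⟩ ⟨by linarith, h⟩).1 h1
      · rw [← Real.sin_pi_sub]
        exact (Real.arcsin_lt_iff_lt_sin ⟨by linarith, by linarith⟩
          ⟨by linarith, by linarith⟩).1 (by linarith)
    unfold dRL
    rw [Real.sqrt_lt' (by norm_num)]
    have k1 : 0 < (d * Real.cos δ) * (Real.sin σ - d / 4) :=
      mul_pos (mul_pos hd0 hc) (by linarith)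
    have k2 : 0 ≤ (1 - Real.cos δ) * (4 + 4 * Real.cos δ - d ^ 2) :=
      mul_nonneg (by linarith) (by nlinarith)
    nlinarith
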